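/- Let Γ = (V,E) be a finite simplicial graph with #V = 6 and #E ≤ 8. Then the right-angled Coxeter group C(Γ) is coherent. -/

import Mathlib

def Group.Slender (G : Type*) [Group G] : Prop := ∀ H : Subgroup G, H.FG

def Group.FinitelyPresented (G : Type*) [Group G] : Prop :=
  ∃ (n : ℕ) (rels : Set (FreeGroup (Fin n))), rels.Finite ∧ Nonempty (PresentedGroup rels ≃* G)

def Group.Coherent (G : Type*) [Group G] : Prop :=
  ∀ H : Subgroup G, H.FG → Group.FinitelyPresented H

/-- The Coxeter matrix of the right-angled Coxeter group of a simplicial graph `Γ`: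
the label of every edge is `2`, and non-adjacent distinct vertices get the label `0`
(that is, `∞`: no relation). -/
def SimpleGraph.coxeterMatrix {V : Type*} (Γ : SimpleGraph V) [DecidableEq V]
    [DecidableRel Γ.Adj] : CoxeterMatrix V where
  M v w := if v = w then 1 else if Γ.Adj v w then 2 else 0
  isSymm := Matrix.IsSymm.ext fun a b => by
    rcases eq_or_ne a b with h | h
    · simp [h]
    · simp [h, h.symm, Γ.adj_comm]
  diagonal v := by simp
  off_diagonal v w h := by simp only [if_neg h]; split <;> omega

/-- The right-angled Coxeter group
`C(Γ) = ⟨V ∣ v² = 1 for all v ∈ V, (vw)² = 1 for all {v,w} ∈ E⟩` of a simplicial graph `Γ`. -/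
def SimpleGraph.racg {V : Type*} (Γ : SimpleGraph V) [DecidableEq V]
    [DecidableRel Γ.Adj] : Type _ :=
  Γ.coxeterMatrix.Group

instance {V : Type*} (Γ : SimpleGraph V) [DecidableEq V] [DecidableRel Γ.Adj] :
    Group Γ.racg :=
  inferInstanceAs (Group Γ.coxeterMatrix.Group)

/-!
A finitely generated group acting on a tree with coherent vertex stabilizers and finitely generated
edge stabilizers is finitely presented: finitely many relators, one batch for each vertex of a large
finite subtree, already present a group `Q` that maps onto it, and the translates of the subtree by
`Q`, glued only along visible transports, form a connected graph mapping locally injectively to the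
tree, hence injectively. So a group acting on a tree with coherent vertex stabilizers and slender
edge stabilizers is coherent.

A vertex `v` of `Γ` writes the right-angled Coxeter group as an amalgam `A *_C (C × ℤ/2)`, where `A`
is generated by the other vertices and `C` by the link of `v`. When the complement of the link is a
matching, `C` is slender, and coherence passes from `A` to the whole group. If no vertex has this
property, then every degree is at least `3`, and some neighbour `a` of a vertex misses two further
vertices, so that there are at least `3 + 3` vertices and at least `9` edges. Hence a graph with at
most `8` edges can be taken apart one vertex at a time.
-/

section FinitelyPresented

variable {G H : Type*} [Group G] [Group H]

theorem finitelyPresented_iff_isFinitelyPresented :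
    Group.FinitelyPresented G ↔ Group.IsFinitelyPresented G := by
  constructor
  · rintro ⟨n, rels, hrels, ⟨e⟩⟩
    have := hrels.to_subtype
    exact .equiv e
  · intro h
    obtain ⟨n, rels, hrels, ⟨e⟩⟩ := h.exists_mulEquiv_presentedGroup
    exact ⟨n, rels, hrels, ⟨e.symm⟩⟩

theorem isFinitelyNormallyGenerated_ker [hG : Group.FG G] [hH : Group.IsFinitelyPresented H]
    {f : G →* H} (hf : Function.Surjective f) : f.ker.IsFinitelyNormallyGenerated := by
  obtain ⟨n, φ, hφ, R, hR, hRφ⟩ := hH.out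
  obtain ⟨S, hS, hSfin⟩ := Group.fg_iff.1 hG
  obtain ⟨ψ, hψ⟩ : ∃ ψ : FreeGroup (Fin n) →* G, ∀ w, f (ψ w) = φ w := by
    choose y hy using fun i ↦ hf (φ (.of i))
    exact ⟨FreeGroup.lift y, DFunLike.congr_fun
      (FreeGroup.ext_hom (f.comp (FreeGroup.lift y)) φ (by simp [hy]))⟩
  choose w hw using fun g ↦ hφ (f g)
  set N := Subgroup.normalClosure (ψ '' R ∪ (fun g ↦ (ψ (w g))⁻¹ * g) '' S)
  have hψN : φ.ker ≤ N.comap ψ := hRφ ▸ Subgroup.normalClosure_le_normal fun r hr ↦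
    Subgroup.subset_normalClosure (.inl ⟨r, hr, rfl⟩)
  have hNf : N ≤ f.ker := by
    refine Subgroup.normalClosure_le_normal ?_
    rintro _ (⟨r, hr, rfl⟩ | ⟨g, -, rfl⟩)
    · exact (hψ r).trans (hRφ ▸ Subgroup.subset_normalClosure hr : r ∈ φ.ker)
    · simp [MonoidHom.mem_ker, hψ, hw]
  have hsup : ψ.range ⊔ N = ⊤ := by
    rw [eq_top_iff, ← hS, Subgroup.closure_le]
    intro g hg
    rw [← mul_inv_cancel_left (ψ (w g)) g]
    exact mul_mem (Subgroup.mem_sup_left ⟨_, rfl⟩)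
      (Subgroup.mem_sup_right (Subgroup.subset_normalClosure (.inr ⟨g, hg, rfl⟩)))
  refine ⟨_, (hR.image _).union (hSfin.image _), le_antisymm hNf fun g hg ↦ ?_⟩
  obtain ⟨_, ⟨v, rfl⟩, m, hm, rfl⟩ := Subgroup.mem_sup_of_normal_right.1 (hsup.ge trivial : g ∈ _)
  have hv : φ v = 1 := by rw [← hψ, ← hg, map_mul, MonoidHom.mem_ker.1 (hNf hm), mul_one]
  exact mul_mem (hψN hv) hm

theorem fg_map {K : Subgroup G} (hK : K.FG) (f : G →* H) : (K.map f).FG :=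
  (Subgroup.fg_iff_submonoid_fg _).2 (((Subgroup.fg_iff_submonoid_fg K).1 hK).map f)

theorem fg_of_fg_map_of_injective {f : G →* H} (hf : Function.Injective f) {K : Subgroup G}
    (hK : (K.map f).FG) : K.FG := by
  have := (Group.fg_iff_subgroup_fg _).2 hK
  let e := (K.equivMapOfInjective f hf).symm
  exact (Group.fg_iff_subgroup_fg _).1 (Group.fg_of_surjective (f := e.toMonoidHom) e.surjective)

theorem subgroupComap_injective {f : G →* H} (hf : Function.Injective f) (K : Subgroup H) :
    Function.Injective (f.subgroupComap K) :=
  fun _ _ h ↦ Subtype.ext (hf (Subtype.ext_iff.1 h))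

theorem coherent_of_injective {f : G →* H} (hf : Function.Injective f) (hH : Group.Coherent H) :
    Group.Coherent G := fun K hK ↦ by
  have := finitelyPresented_iff_isFinitelyPresented.1 (hH (K.map f) (fg_map hK f))
  exact finitelyPresented_iff_isFinitelyPresented.2 (.equiv (K.equivMapOfInjective f hf).symm)

theorem coherent_congr (e : G ≃* H) (hG : Group.Coherent G) : Group.Coherent H :=
  coherent_of_injective (f := e.symm.toMonoidHom) e.symm.injective hG

theorem slender_of_injective {f : G →* H} (hf : Function.Injective f) (hH : Group.Slender H) :
    Group.Slender G :=
  fun K ↦ fg_of_fg_map_of_injective hf (hH (K.map f))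

theorem slender_of_surjective {f : G →* H} (hf : Function.Surjective f) (hG : Group.Slender G) :
    Group.Slender H := fun K ↦ by
  rw [← Subgroup.map_comap_eq_self_of_surjective hf K]
  exact fg_map (hG _) f

theorem slender_congr (e : G ≃* H) (hG : Group.Slender G) : Group.Slender H :=
  slender_of_surjective (f := e.toMonoidHom) e.surjective hG

theorem fg_of_le_of_slender {K L : Subgroup G} (hK : Group.Slender K) (hLK : L ≤ K) : L.FG := by
  rw [← Subgroup.map_subgroupOf_eq_of_le hLK]
  exact fg_map (hK _) K.subtype

theorem finitelyPresented_of_le_of_coherent {K L : Subgroup G} (hK : Group.Coherent K)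
    (hLK : L ≤ K) (hL : L.FG) : Group.FinitelyPresented L := by
  rw [← Subgroup.map_subgroupOf_eq_of_le hLK] at hL
  have := finitelyPresented_iff_isFinitelyPresented.1
    (hK _ (fg_of_fg_map_of_injective K.subtype_injective hL))
  exact finitelyPresented_iff_isFinitelyPresented.2 (.equiv (Subgroup.subgroupOfEquivOfLe hLK))

end FinitelyPresented

section LocalTransport

variable {Q X : Type*} [Group Q] [MulAction Q X]

/-- `IsLocalTransport E K u v q` says that `q` is a word in `E` and `E⁻¹` whose successive letters
move `u` to `v` without leaving `K`. Such words are the ones visible from the finite piece `K` of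
the space `X`. -/
inductive IsLocalTransport (E : Set Q) (K : Set X) : X → X → Q → Prop
  | one (u : X) : IsLocalTransport E K u u 1
  | of {u v : X} {e : Q} (he : e ∈ E) (hu : u ∈ K) (hv : v ∈ K) (h : e • u = v) :
      IsLocalTransport E K u v e
  | mul {u v w : X} {p q : Q} (hq : IsLocalTransport E K v w q) (hp : IsLocalTransport E K u v p) :
      IsLocalTransport E K u w (q * p)
  | inv {u v : X} {q : Q} (hq : IsLocalTransport E K u v q) : IsLocalTransport E K v u q⁻¹

namespace IsLocalTransport

variable {E : Set Q} {K : Set X} {u v : X} {q : Q}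

theorem smul_eq (h : IsLocalTransport E K u v q) : q • u = v := by
  induction h with
  | one u => exact one_smul _ u
  | of _ _ _ h => exact h
  | mul _ _ hq hp => rw [mul_smul, hp, hq]
  | inv _ hq => rw [inv_smul_eq_iff, hq]

theorem mono {F : Set Q} (hEF : E ⊆ F) (h : IsLocalTransport E K u v q) :
    IsLocalTransport F K u v q := by
  induction h with
  | one u => exact .one u
  | of he hu hv h => exact .of (hEF he) hu hv h
  | mul _ _ hq hp => exact .mul hq hp
  | inv _ hq => exact .inv hq

theorem map {Y : Type*} [MulAction Q Y] (f : X →[Q] Y) {L : Set Y} (hf : Set.MapsTo f K L)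
    (h : IsLocalTransport E K u v q) : IsLocalTransport E L (f u) (f v) q := by
  induction h with
  | one u => exact .one (f u)
  | of he hu hv h => exact .of he (hf hu) (hf hv) (by rw [← map_smul, h])
  | mul _ _ hq hp => exact .mul hq hp
  | inv _ hq => exact .inv hq

theorem exists_lift {P : Type*} [Group P] [MulAction P X] {π : P →* Q}
    (hπ : ∀ (p : P) (x : X), π p • x = p • x) {F : Set P} (hEF : E ⊆ π '' F)
    (h : IsLocalTransport E K u v q) : ∃ p, π p = q ∧ IsLocalTransport F K u v p := by
  induction h with
  | one u => exact ⟨1, map_one π, .one u⟩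
  | of he hu hv h =>
    obtain ⟨f, hf, rfl⟩ := hEF he
    exact ⟨f, rfl, .of hf hu hv (by rw [← hπ, h])⟩
  | mul _ _ hq hp =>
    obtain ⟨q, rfl, hq⟩ := hq
    obtain ⟨p, rfl, hp⟩ := hp
    exact ⟨q * p, map_mul π q p, hq.mul hp⟩
  | inv _ hq =>
    obtain ⟨q, rfl, hq⟩ := hq
    exact ⟨q⁻¹, map_inv π q, hq.inv⟩

end IsLocalTransport

/-- The subgroup of local transports from `u` to itself. -/
def localStabilizer (E : Set Q) (K : Set X) (u : X) : Subgroup Q where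
  carrier := {q | IsLocalTransport E K u u q}
  one_mem' := .one u
  mul_mem' := .mul
  inv_mem' := .inv

/-- Schreier's method: `τ` chooses one local transport from `u` to every point that can be reached,
and the generators are the loops of the resulting Schreier graph. -/
theorem localStabilizer_fg {E : Set Q} {K : Set X} (hE : E.Finite) (hK : K.Finite) (u : X) :
    (localStabilizer E K u).FG := by
  choose! τ hτ using fun (x : X) (h : ∃ q, IsLocalTransport E K u x q) ↦ h
  let loop (p : Q × X) : Q := (τ (p.1 • p.2))⁻¹ * p.1 * τ p.2
  let edges : Set (Q × X) :=
    {p ∈ E ×ˢ K | p.1 • p.2 ∈ K ∧ ∃ q, IsLocalTransport E K u p.2 q}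
  have hτu : τ u ∈ localStabilizer E K u := hτ u ⟨1, .one u⟩
  have key {x y : X} {q : Q} (h : IsLocalTransport E K x y q) :
      (∃ p, IsLocalTransport E K u x p) →
        (τ y)⁻¹ * q * τ x ∈ Subgroup.closure (insert (τ u) (loop '' edges)) := by
    induction h with
    | one x => simp [one_mem]
    | @of x y e he hx hy h =>
      subst h
      exact fun hp ↦ Subgroup.subset_closure (.inr ⟨(e, x), ⟨⟨he, hx⟩, hy, hp⟩, rfl⟩)
    | @mul x y z p q _ hp ihq ihp =>
      rintro ⟨r, hr⟩
      simpa [mul_assoc] using mul_mem (ihq ⟨_, hp.mul hr⟩) (ihp ⟨r, hr⟩)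
    | inv hq ih =>
      rintro ⟨r, hr⟩
      simpa [mul_assoc] using inv_mem (ih ⟨_, hq.inv.mul hr⟩)
  refine (Subgroup.fg_iff _).2 ⟨insert (τ u) (loop '' edges), le_antisymm ?_ fun q hq ↦ ?_,
    (((hE.prod hK).subset (Set.sep_subset _ _)).image loop).insert _⟩
  · rw [Subgroup.closure_le, Set.insert_subset_iff]
    refine ⟨hτu, ?_⟩
    rintro _ ⟨⟨e, x⟩, ⟨⟨he, hx⟩, hy, p, hp⟩, rfl⟩
    have hex : IsLocalTransport E K x (e • x) e := .of he hx hy rfl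
    exact ((hτ _ ⟨_, hex.mul hp⟩).inv.mul hex).mul (hτ x ⟨p, hp⟩)
  · have hmem := Subgroup.subset_closure (k := insert (τ u) (loop '' edges)) (Set.mem_insert _ _)
    simpa [mul_assoc] using mul_mem (mul_mem hmem (key hq ⟨1, .one u⟩)) (inv_mem hmem)

theorem exists_finite_isLocalTransport {K : Set X} (hK : K.Finite) {x : X} (hx : x ∈ K)
    (hfg : (MulAction.stabilizer Q x).FG) :
    ∃ F : Set Q, F.Finite ∧ (∀ f ∈ F, f • x ∈ K) ∧
      ∀ q : Q, q • x ∈ K → IsLocalTransport F K x (q • x) q := by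
  obtain ⟨S, hS, hSfin⟩ := (Subgroup.fg_iff _).1 hfg
  have hSx {s : Q} (hs : s ∈ S) : s • x = x := hS.le (Subgroup.subset_closure hs)
  choose! τ hτ using fun (y : X) (h : ∃ q : Q, q • x = y) ↦ h
  let F := S ∪ τ '' (K ∩ MulAction.orbit Q x)
  refine ⟨F, hSfin.union ((hK.inter_of_left _).image τ), ?_, fun q hq ↦ ?_⟩
  · rintro f (hf | ⟨y, ⟨hyK, hy⟩, rfl⟩)
    · rwa [hSx hf]
    · rwa [hτ y hy]
  · have hqx : q • x ∈ MulAction.orbit Q x := ⟨q, rfl⟩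
    have hstab : (τ (q • x))⁻¹ * q ∈ Subgroup.closure S := by
      rw [hS, MulAction.mem_stabilizer_iff, mul_smul, inv_smul_eq_iff, hτ _ hqx]
    have hloc : Subgroup.closure S ≤ localStabilizer F K x :=
      (Subgroup.closure_le _).2 fun s hs ↦ .of (.inl hs) hx hx (hSx hs)
    have hτq : IsLocalTransport F K x (q • x) (τ (q • x)) :=
      .of (.inr ⟨_, ⟨hq, hqx⟩, rfl⟩) hx hq (hτ _ hqx)
    simpa only [mul_inv_cancel_left] using hτq.mul (hloc hstab)

end LocalTransport

section LocallyInjective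

variable {A B : Type*} {Γ : SimpleGraph A} {T : SimpleGraph B} {f : Γ →g T}

theorem isChain_edges_map_of_isPath
    (hf : ∀ a b c, Γ.Adj a b → Γ.Adj a c → f b = f c → b = c) {a b : A} {p : Γ.Walk a b}
    (hp : p.IsPath) : (p.map f).edges.IsChain (· ≠ ·) := by
  induction p with
  | nil => simp
  | @cons u v w h p ih =>
    rw [SimpleGraph.Walk.cons_isPath_iff] at hp
    cases p with
    | nil => simp
    | @cons _ v' _ h' p =>
      simp only [SimpleGraph.Walk.map_cons, SimpleGraph.Walk.edges_cons] at ih ⊢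
      refine List.isChain_cons_cons.2 ⟨fun he ↦ ?_, ih hp.1⟩
      obtain ⟨huv, -⟩ | ⟨huv', -⟩ := Sym2.eq_iff.1 he
      · exact (f.map_adj h).ne huv
      · exact hp.2 (by simp [hf v u v' h.symm h' huv'])

theorem injective_of_locally_injective (hT : T.IsAcyclic) (hΓ : Γ.Preconnected)
    (hf : ∀ a b c, Γ.Adj a b → Γ.Adj a c → f b = f c → b = c) : Function.Injective f := by
  intro a b hab
  classical
  obtain ⟨p, hp⟩ := (hΓ a b).exists_isPath
  have hfp : (p.map f).IsPath :=
    (hT.isPath_iff_isChain _).2 (isChain_edges_map_of_isPath hf hp)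
  cases p with
  | nil => rfl
  | cons h p =>
    rw [SimpleGraph.Walk.map_cons, SimpleGraph.Walk.cons_isPath_iff, hab] at hfp
    exact (hfp.2 (SimpleGraph.Walk.end_mem_support _)).elim

end LocallyInjective

section Development

variable {Q X : Type*} [Group Q] [MulAction Q X] (T : SimpleGraph X) (E : Set Q) (K : Set X)

/-- The relation on `Q × K` identifying `(p, u)` with `(q, v)` when some local transport `r` from
`v` to `u` satisfies `q = p * r`. -/
def developmentSetoid : Setoid (Q × K) where
  r a b := IsLocalTransport E K (b.2 : X) a.2 (a.1⁻¹ * b.1)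
  iseqv.refl a := by simpa using IsLocalTransport.one (a.2 : X)
  iseqv.symm h := by simpa using h.inv
  iseqv.trans h₁ h₂ := by simpa [mul_assoc] using h₁.mul h₂

/-- The development of the piece `K` of the `Q`-space `X`: translates of `K`, one for each element
of `Q`, glued along local transports only. -/
def Development : Type _ :=
  Quotient (developmentSetoid E K)

namespace Development

variable {E K}

/-- The point of the development given by `u ∈ K` in the translate of `K` labelled `q`. -/
def mk (q : Q) (u : K) : Development E K :=
  Quotient.mk (developmentSetoid E K) (q, u)

theorem mk_eq_mk_iff {p q : Q} {u v : K} :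
    (mk p u : Development E K) = mk q v ↔ IsLocalTransport E K (v : X) u (p⁻¹ * q) :=
  Quotient.eq

/-- The natural map from the development to the space. -/
def proj : Development E K → X :=
  Quotient.lift (fun a ↦ a.1 • (a.2 : X)) fun a b h ↦ by
    simpa [mul_smul, smul_eq_iff_eq_inv_smul] using h.smul_eq.symm

/-- The graph on the development whose edges are the edges of `T` between points of the same
translate of `K`. -/
def graph : SimpleGraph (Development E K) where
  Adj a b := ∃ (q : Q) (u v : K), T.Adj u v ∧ a = mk q u ∧ b = mk q v
  symm := ⟨fun _ _ ⟨q, u, v, h, ha, hb⟩ ↦ ⟨q, v, u, h.symm, hb, ha⟩⟩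
  loopless := ⟨fun _ ⟨q, u, v, h, ha, hb⟩ ↦ h.ne <| by
    simpa using (mk_eq_mk_iff.1 (ha.symm.trans hb)).smul_eq.symm⟩

variable {T}

theorem graph_adj_mk (q : Q) {u v : K} (h : T.Adj u v) :
    (graph T : SimpleGraph (Development E K)).Adj (mk q u) (mk q v) :=
  ⟨q, u, v, h, rfl, rfl⟩

theorem graph_preconnected (hK : (T.induce K).Preconnected) (hE : Subgroup.closure E = ⊤)
    (hEK : ∀ e ∈ E, ∃ u ∈ K, e • u ∈ K) :
    (graph T : SimpleGraph (Development E K)).Preconnected := by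
  have hsheet (p : Q) (u v : K) : (graph T).Reachable (mk p u : Development E K) (mk p v) :=
    (hK u v).map ⟨mk p, graph_adj_mk p⟩
  have key (q : Q) : ∀ (p : Q) (u v : K),
      (graph T).Reachable (mk p u : Development E K) (mk (p * q) v) := by
    induction hE.ge (Subgroup.mem_top q) using Subgroup.closure_induction with
    | mem e he =>
      intro p u v
      obtain ⟨w, hw, hew⟩ := hEK e he
      have hglue : (mk p ⟨e • w, hew⟩ : Development E K) = mk (p * e) ⟨w, hw⟩ :=
        mk_eq_mk_iff.2 (by simpa using IsLocalTransport.of he hw hew rfl)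
      exact (hglue ▸ hsheet p u ⟨e • w, hew⟩).trans (hsheet (p * e) ⟨w, hw⟩ v)
    | one => simpa using hsheet
    | mul q r _ _ hq hr =>
      exact fun p u v ↦ (hq p u u).trans (by simpa [mul_assoc] using hr (p * q) u v)
    | inv q _ hq => exact fun p u v ↦ by simpa using (hq (p * q⁻¹) v u).symm
  rintro ⟨p, u⟩ ⟨q, v⟩
  have hpq := key (p⁻¹ * q) p u v
  rwa [mul_inv_cancel_left] at hpq

theorem proj_injective (hT : T.IsAcyclic)
    (hadj : ∀ (q : Q) (x y : X), T.Adj x y → T.Adj (q • x) (q • y))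
    (hK : (T.induce K).Preconnected) (hE : Subgroup.closure E = ⊤)
    (hEK : ∀ e ∈ E, ∃ u ∈ K, e • u ∈ K)
    (hedge : ∀ u ∈ K, ∀ v ∈ K, T.Adj u v → ∀ q : Q, q • u ∈ K → q • v ∈ K →
      IsLocalTransport E K u (q • u) q → IsLocalTransport E K v (q • v) q) :
    Function.Injective (proj : Development E K → X) := by
  let f : (graph T : SimpleGraph (Development E K)) →g T :=
    ⟨proj, by rintro _ _ ⟨q, u, v, h, rfl, rfl⟩; exact hadj q u v h⟩
  refine injective_of_locally_injective (f := f) hT (graph_preconnected hK hE hEK) ?_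
  rintro _ _ _ ⟨q, u, v, -, rfl, rfl⟩ ⟨p, u', v', h, hu, rfl⟩ hv
  have hu := (mk_eq_mk_iff.1 hu)
  have hv : (q⁻¹ * p) • (v' : X) = v := by
    rw [mul_smul, inv_smul_eq_iff]
    exact hv.symm
  have hedge := hedge u' u'.2 v' v'.2 h (q⁻¹ * p)
  rw [hu.smul_eq, hv] at hedge
  exact mk_eq_mk_iff.2 (hedge u.2 v.2 hu)

end Development

variable {T E K}

theorem isLocalTransport_of_isAcyclic (hT : T.IsAcyclic)
    (hadj : ∀ (q : Q) (x y : X), T.Adj x y → T.Adj (q • x) (q • y))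
    (hK : (T.induce K).Preconnected) (hE : Subgroup.closure E = ⊤)
    (hEK : ∀ e ∈ E, ∃ u ∈ K, e • u ∈ K)
    (hedge : ∀ u ∈ K, ∀ v ∈ K, T.Adj u v → ∀ q : Q, q • u ∈ K → q • v ∈ K →
      IsLocalTransport E K u (q • u) q → IsLocalTransport E K v (q • v) q)
    {q : Q} {u : X} (hu : u ∈ K) (hqu : q • u ∈ K) : IsLocalTransport E K u (q • u) q := by
  have h : (Development.mk 1 ⟨q • u, hqu⟩ : Development E K) = .mk q ⟨u, hu⟩ :=
    Development.proj_injective hT hadj hK hE hEK hedge (one_smul _ _)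
  simpa using Development.mk_eq_mk_iff.1 h

/-- A local transport `q` of one end of an edge is determined by `π q`: if `π q` moves the edge
inside `K`, then a transport of the whole edge lies over `π q` and, being a transport of that end,
equals `q`; hence `q` transports the other end as well. -/
theorem injective_of_action_on_acyclic {G : Type*} [Group G] [MulAction G X] {π : Q →* G}
    (hπ : ∀ (q : Q) (x : X), π q • x = q • x) (hT : T.IsAcyclic)
    (hadj : ∀ (g : G) (x y : X), T.Adj x y → T.Adj (g • x) (g • y))
    (hK : (T.induce K).Connected) (hE : Subgroup.closure E = ⊤)
    (hEK : ∀ e ∈ E, ∃ u ∈ K, e • u ∈ K)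
    (hpair : ∀ u ∈ K, ∀ v ∈ K, T.Adj u v → ∀ g : G, g • u ∈ K → g • v ∈ K →
      IsLocalTransport (π '' E) (K ×ˢ K) (u, v) (g • (u, v)) g)
    (hloc : ∀ u ∈ K, ∀ q, IsLocalTransport E K u u q → π q = 1 → q = 1) :
    Function.Injective π := by
  refine (injective_iff_map_eq_one π).2 fun q hq ↦ ?_
  obtain ⟨u, hu⟩ := hK.nonempty
  have hqu : q • u = u := by rw [← hπ, hq, one_smul]
  refine hloc u hu q ?_ hq
  have key := isLocalTransport_of_isAcyclic (q := q) hT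
    (fun q x y h ↦ by simpa only [hπ] using hadj (π q) x y h) hK.preconnected hE hEK ?_ hu
    (by rwa [hqu])
  · rwa [hqu] at key
  intro u hu v hv huv q hqu hqv hq
  obtain ⟨r, hr, hr'⟩ := (hpair u hu v hv huv (π q) (by rwa [hπ]) (by rwa [hπ])).exists_lift
    (fun q x ↦ Prod.ext (hπ q x.1) (hπ q x.2)) subset_rfl
  have hru := hr'.map (MulActionHom.fst Q X X) (L := K) fun _ h ↦ h.1
  have hrv := hr'.map (MulActionHom.snd Q X X) (L := K) fun _ h ↦ h.2
  simp only [MulActionHom.fst_apply, MulActionHom.snd_apply, Prod.smul_fst, Prod.smul_snd,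
    hπ] at hru hrv
  have hrq : r⁻¹ * q = 1 := hloc u hu _ (hru.inv.mul hq) (by simp [hr])
  rwa [inv_mul_eq_one.1 hrq] at hrv

end Development

section TreeAction

variable {G X : Type*} [Group G] [MulAction G X]

theorem exists_finite_relators {Q : Type*} [Group Q] [MulAction Q X] {φ : Q →* G}
    (hφ : ∀ (q : Q) (x : X), φ q • x = q • x) {E : Set Q} {K : Set X} (hE : E.Finite)
    (hK : K.Finite) (hstab : ∀ x ∈ K, Group.Coherent (MulAction.stabilizer G x)) :
    ∃ R : Set Q, R.Finite ∧ R ⊆ φ.ker ∧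
      ∀ u ∈ K, ∀ q, IsLocalTransport E K u u q → φ q = 1 → q ∈ Subgroup.normalClosure R := by
  have hlocal (u : X) (hu : u ∈ K) : ∃ R : Set Q, R.Finite ∧ R ⊆ φ.ker ∧
      ∀ q, IsLocalTransport E K u u q → φ q = 1 → q ∈ Subgroup.normalClosure R := by
    let L := localStabilizer E K u
    have hL : L.FG := localStabilizer_fg hE hK u
    have hLu : L.map φ ≤ MulAction.stabilizer G u := by
      rintro _ ⟨q, hq, rfl⟩
      exact (hφ q u).trans hq.smul_eq
    have : Group.FG L := (Group.fg_iff_subgroup_fg L).2 hL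
    have := finitelyPresented_iff_isFinitelyPresented.1
      (finitelyPresented_of_le_of_coherent (hstab u hu) hLu (fg_map hL φ))
    obtain ⟨R, hR, hRφ⟩ := isFinitelyNormallyGenerated_ker (φ.subgroupMap_surjective L)
    have hker {q : L} : q ∈ (φ.subgroupMap L).ker ↔ φ q = 1 := Subtype.ext_iff
    refine ⟨(↑) '' R, hR.image _, ?_, fun q hq hφq ↦ ?_⟩
    · rintro _ ⟨r, hr, rfl⟩
      exact hker.1 (hRφ ▸ Subgroup.subset_normalClosure hr)
    · have hRL : Subgroup.normalClosure R ≤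
          (Subgroup.normalClosure ((↑) '' R : Set Q)).comap L.subtype :=
        Subgroup.normalClosure_le_normal fun r hr ↦ Subgroup.subset_normalClosure ⟨r, hr, rfl⟩
      exact hRL (x := ⟨q, hq⟩) (hRφ ▸ hker.2 hφq)
  choose! R hR hRφ hRK using hlocal
  refine ⟨⋃ u ∈ K, R u, hK.biUnion hR, Set.iUnion₂_subset hRφ, fun u hu q hq hφq ↦ ?_⟩
  exact Subgroup.normalClosure_mono (Set.subset_biUnion_of_mem hu) (hRK u hu q hq hφq)

theorem exists_finite_transport_data (hG : Group.FG G) {T : SimpleGraph X} (hT : T.Connected)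
    (hpair : ∀ x y, T.Adj x y → (MulAction.stabilizer G (x, y)).FG) :
    ∃ (K : Set X) (F : Set G), K.Finite ∧ F.Finite ∧ (T.induce K).Connected ∧
      Subgroup.closure F = ⊤ ∧ (∀ g ∈ F, ∃ u ∈ K, g • u ∈ K) ∧
      ∀ u ∈ K, ∀ v ∈ K, T.Adj u v → ∀ g : G, g • u ∈ K → g • v ∈ K →
        IsLocalTransport F (K ×ˢ K) (u, v) (g • (u, v)) g := by
  classical
  obtain ⟨S, hS, hSfin⟩ := Group.fg_iff.1 hG
  obtain ⟨x⟩ := hT.nonempty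
  obtain ⟨K, hSK, hK⟩ := T.extend_finset_to_connected hT.preconnected
    (t := insert x (hSfin.toFinset.image (· • x))) (Finset.insert_nonempty _ _)
  have hx : x ∈ K := hSK (Finset.mem_insert_self _ _)
  choose! D hD hDK hDG using fun (p : X × X) (hp : p ∈ {p ∈ (K : Set X) ×ˢ K | T.Adj p.1 p.2}) ↦
    exists_finite_isLocalTransport (Q := G) (K.finite_toSet.prod K.finite_toSet) hp.1
      (hpair p.1 p.2 hp.2)
  refine ⟨K, S ∪ ⋃ p ∈ {p ∈ (K : Set X) ×ˢ K | T.Adj p.1 p.2}, D p, K.finite_toSet,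
    hSfin.union (((K.finite_toSet.prod K.finite_toSet).subset (Set.sep_subset _ _)).biUnion hD),
    hK, top_le_iff.1 (hS ▸ Subgroup.closure_mono Set.subset_union_left), ?_, ?_⟩
  · rintro g (hg | hg)
    · exact ⟨x, hx, hSK (Finset.mem_insert_of_mem (Finset.mem_image_of_mem _ (by simpa using hg)))⟩
    · obtain ⟨p, hp, hg⟩ := Set.mem_iUnion₂.1 hg
      exact ⟨p.1, hp.1.1, (hDK p hp g hg).1⟩
  · intro u hu v hv huv g hgu hgv
    exact (hDG (u, v) ⟨⟨hu, hv⟩, huv⟩ g ⟨hgu, hgv⟩).mono fun d hd ↦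
      .inr (Set.mem_biUnion (x := (u, v)) ⟨⟨hu, hv⟩, huv⟩ hd)

variable {T : SimpleGraph X}

theorem finitelyPresented_of_action_on_tree (hG : Group.FG G) (hT : T.IsTree)
    (hadj : ∀ (g : G) (x y : X), T.Adj x y → T.Adj (g • x) (g • y))
    (hvert : ∀ x : X, Group.Coherent (MulAction.stabilizer G x))
    (hpair : ∀ x y, T.Adj x y → (MulAction.stabilizer G (x, y)).FG) :
    Group.FinitelyPresented G := by
  obtain ⟨K, F, hK, hF, hKc, hFtop, hFK, hFG⟩ := exists_finite_transport_data hG hT.connected hpair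
  have := hF.to_subtype
  let φ : FreeGroup F →* G := FreeGroup.lift (↑)
  let := MulAction.compHom X φ
  obtain ⟨R, hR, hRφ, hRK⟩ := exists_finite_relators (φ := φ) (fun _ _ ↦ rfl)
    (Set.finite_range FreeGroup.of) hK fun x _ ↦ hvert x
  have := hR.to_subtype
  obtain ⟨π, hπ⟩ : ∃ π : PresentedGroup R →* G, ∀ q, π (PresentedGroup.mk R q) = φ q :=
    ⟨PresentedGroup.toGroup hRφ, fun _ ↦ rfl⟩
  have hπof (f : F) : π (.of f) = f := (hπ _).trans FreeGroup.lift_apply_of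
  let := MulAction.compHom X π
  have hinj : Function.Injective π := by
    refine injective_of_action_on_acyclic (E := Set.range (PresentedGroup.of (rels := R)))
      (fun _ _ ↦ rfl) hT.isAcyclic hadj hKc (PresentedGroup.closure_range_of R) ?_
      (fun u hu v hv huv g hgu hgv ↦ ?_) fun u hu p hp hπp ↦ ?_
    · rintro _ ⟨f, rfl⟩
      obtain ⟨u, hu, hfu⟩ := hFK f f.2
      exact ⟨u, hu, (congrArg (· • u) (hπof f)).symm ▸ hfu⟩
    · exact (hFG u hu v hv huv g hgu hgv).mono fun f hf ↦ ⟨_, ⟨⟨f, hf⟩, rfl⟩, hπof ⟨f, hf⟩⟩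
    · obtain ⟨q, rfl, hq⟩ := hp.exists_lift (π := PresentedGroup.mk R) (F := Set.range FreeGroup.of)
        (fun q x ↦ congrArg (· • x) (hπ q)) (by rw [← Set.range_comp]; rfl)
      exact (QuotientGroup.eq_one_iff q).2 (hRK u hu q hq ((hπ q).symm.trans hπp))
  have hsurj : Function.Surjective π := by
    rw [← MonoidHom.range_eq_top, eq_top_iff, ← hFtop, Subgroup.closure_le]
    exact fun f hf ↦ ⟨_, hπof ⟨f, hf⟩⟩
  exact finitelyPresented_iff_isFinitelyPresented.2 (.equiv (.ofBijective π ⟨hinj, hsurj⟩))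

theorem coherent_of_action_on_tree (hT : T.IsTree)
    (hadj : ∀ (g : G) (x y : X), T.Adj x y → T.Adj (g • x) (g • y))
    (hvert : ∀ x : X, Group.Coherent (MulAction.stabilizer G x))
    (hpair : ∀ x y, T.Adj x y → Group.Slender (MulAction.stabilizer G (x, y))) :
    Group.Coherent G := by
  intro H hH
  refine finitelyPresented_of_action_on_tree ((Group.fg_iff_subgroup_fg H).2 hH) hT
    (fun h ↦ hadj h) (fun x ↦ ?_) fun x y hxy ↦ ?_
  · change Group.Coherent ((MulAction.stabilizer G x).comap H.subtype)
    exact coherent_of_injective (subgroupComap_injective H.subtype_injective _) (hvert x)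
  · change ((MulAction.stabilizer G (x, y)).comap H.subtype).FG
    exact fg_of_le_of_slender
      (slender_of_injective (subgroupComap_injective H.subtype_injective _) (hpair x y hxy)) le_rfl

end TreeAction

section ReducedWords

/-- Words without equal neighbouring letters: the normal forms of the free product of copies of
`ℤ/2` indexed by `S`. -/
abbrev ReducedWord (S : Type*) : Type _ :=
  {l : List S // l.IsChain (· ≠ ·)}

namespace ReducedWord

variable {S : Type*}

/-- The empty word. -/
def nil : ReducedWord S :=
  ⟨[], List.isChain_nil⟩

/-- The one-letter word `s`. -/
def single (s : S) : ReducedWord S :=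
  ⟨[s], List.isChain_singleton s⟩

variable (S) in
/-- The tree in which a word is joined to its extensions by one final letter. -/
def tree : SimpleGraph (ReducedWord S) where
  Adj x y := ∃ s, y.1 = x.1 ++ [s] ∨ x.1 = y.1 ++ [s]
  symm := ⟨fun _ _ ⟨s, h⟩ ↦ ⟨s, h.symm⟩⟩
  loopless := ⟨fun _ ⟨_, h⟩ ↦ by simp at h⟩

theorem tree_reachable_nil : ∀ x : ReducedWord S, (tree S).Reachable nil x := by
  rintro ⟨l, hl⟩
  induction l using List.reverseRecOn with
  | nil => rfl
  | append_singleton l s ih =>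
    exact (ih hl.left_of_append).trans (SimpleGraph.Adj.reachable ⟨s, .inl rfl⟩)

/-- Once the edge from `x` to its extension `y` is removed, no step away from a word with prefix `y`
can destroy that prefix. -/
theorem not_reachable_deleteEdges {x y : ReducedWord S} {s : S} (h : y.1 = x.1 ++ [s]) :
    ¬ ((tree S).deleteEdges {s(x, y)}).Reachable y x := by
  have hprefix {a b : ReducedWord S} (p : ((tree S).deleteEdges {s(x, y)}).Walk a b)
      (ha : y.1 <+: a.1) : y.1 <+: b.1 := by
    induction p with
    | nil => exact ha
    | @cons a b c hab _ ih =>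
      obtain ⟨⟨t, hb | ha'⟩, hxy⟩ := SimpleGraph.deleteEdges_adj.1 hab
      · exact ih (hb ▸ ha.trans (List.prefix_append _ _))
      · rw [ha', List.prefix_concat_iff, ← ha'] at ha
        refine ha.elim (fun hya ↦ (hxy ?_).elim) ih
        have hxb := (List.append_inj' (h.symm.trans (hya.trans ha')) rfl).1
        rw [Subtype.ext hxb, Subtype.ext hya, Sym2.eq_swap]
        rfl
  rintro ⟨p⟩
  simpa [h] using (hprefix p List.prefix_rfl).length_le

theorem tree_isTree : (tree S).IsTree where
  connected := { preconnected := fun x y ↦ (tree_reachable_nil x).symm.trans (tree_reachable_nil y)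
                 nonempty := ⟨nil⟩ }
  isAcyclic := by
    refine SimpleGraph.isAcyclic_iff_forall_adj_isBridge.2 fun x y hxy ↦ ?_
    rw [SimpleGraph.isBridge_iff]
    obtain ⟨s, h | h⟩ := hxy
    · exact fun hr ↦ not_reachable_deleteEdges h hr.symm
    · exact fun hr ↦ not_reachable_deleteEdges h (Sym2.eq_swap ▸ hr)

open Classical in
/-- Multiplication by the letter `s` on the left, followed by cancellation. -/
noncomputable def flipList (s : S) (l : List S) : List S :=
  if l.head? = some s then l.tail else s :: l

theorem flipList_self (s : S) (l : List S) : flipList s (s :: l) = l := by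
  simp [flipList]

theorem flipList_of_head?_ne {s : S} {l : List S} (h : l.head? ≠ some s) :
    flipList s l = s :: l := by
  simp [flipList, h]

theorem isChain_flipList (s : S) {l : List S} (hl : l.IsChain (· ≠ ·)) :
    (flipList s l).IsChain (· ≠ ·) := by
  by_cases h : l.head? = some s
  · simpa [flipList, h] using hl.tail
  · rw [flipList_of_head?_ne h, List.isChain_cons]
    exact ⟨fun t ht hst ↦ h (hst ▸ ht), hl⟩

theorem flipList_flipList (s : S) {l : List S} (hl : l.IsChain (· ≠ ·)) :
    flipList s (flipList s l) = l := by
  by_cases h : l.head? = some s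
  · obtain ⟨t, rfl⟩ := List.head?_eq_some_iff.1 h
    rw [flipList_self, flipList_of_head?_ne fun ht ↦ (List.isChain_cons.1 hl).1 s ht rfl]
  · rw [flipList_of_head?_ne h, flipList_self]

theorem map_flipList {f : S → S} (hf : Function.Injective f) (s : S) (l : List S) :
    (flipList s l).map f = flipList (f s) (l.map f) := by
  by_cases h : l.head? = some s
  · obtain ⟨t, rfl⟩ := List.head?_eq_some_iff.1 h
    simp [flipList_self]
  · have hf : (l.map f).head? ≠ some (f s) := by simpa [hf.eq_iff] using h
    rw [flipList_of_head?_ne h, flipList_of_head?_ne hf, List.map_cons]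

theorem flipList_append (s t : S) (l : List S) : ∃ r,
    flipList s (l ++ [t]) = flipList s l ++ [r] ∨ flipList s l = flipList s (l ++ [t]) ++ [r] := by
  cases l with
  | nil =>
    by_cases h : t = s
    · exact ⟨s, .inr (by simp [flipList, h])⟩
    · exact ⟨t, .inl (by simp [flipList, h])⟩
  | cons a l => exact ⟨t, .inl (by by_cases h : a = s <;> simp [flipList, h])⟩

/-- Multiplication by the letter `s`, as a permutation of the reduced words. -/
noncomputable def flipPerm (s : S) : Equiv.Perm (ReducedWord S) where
  toFun x := ⟨flipList s x.1, isChain_flipList s x.2⟩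
  invFun x := ⟨flipList s x.1, isChain_flipList s x.2⟩
  left_inv x := Subtype.ext (flipList_flipList s x.2)
  right_inv x := Subtype.ext (flipList_flipList s x.2)

theorem adj_flipPerm (s : S) {x y : ReducedWord S} (h : (tree S).Adj x y) :
    (tree S).Adj (flipPerm s x) (flipPerm s y) := by
  obtain ⟨t, h | h⟩ := h
  · exact (flipList_append s t x.1).imp fun r hr ↦ by rwa [← h] at hr
  · exact (flipList_append s t y.1).imp fun r hr ↦ by rwa [← h, or_comm] at hr

/-- Multiplication by the letter `s`, as an automorphism of the tree. -/
noncomputable def flipIso (s : S) : tree S ≃g tree S where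
  toEquiv := flipPerm s
  map_rel_iff' {x y} := by
    refine ⟨fun h ↦ ?_, adj_flipPerm s⟩
    rw [← (flipPerm s).left_inv x, ← (flipPerm s).left_inv y]
    exact adj_flipPerm s h

@[simp]
theorem coe_flipIso (s : S) (x : ReducedWord S) : (flipIso s x).1 = flipList s x.1 :=
  rfl

theorem flipIso_mul_self (s : S) : flipIso s * flipIso s = 1 :=
  RelIso.ext fun x ↦ Subtype.ext (flipList_flipList s x.2)

/-- Renaming of the letters along `σ`, as a permutation of the reduced words. -/
def renamePerm (σ : Equiv.Perm S) : Equiv.Perm (ReducedWord S) where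
  toFun x := ⟨x.1.map σ, (List.isChain_map σ).2 (x.2.imp fun _ _ h ↦ σ.injective.ne h)⟩
  invFun x := ⟨x.1.map σ.symm,
    (List.isChain_map σ.symm).2 (x.2.imp fun _ _ h ↦ σ.symm.injective.ne h)⟩
  left_inv x := Subtype.ext (by simp)
  right_inv x := Subtype.ext (by simp)

theorem adj_renamePerm (σ : Equiv.Perm S) {x y : ReducedWord S} (h : (tree S).Adj x y) :
    (tree S).Adj (renamePerm σ x) (renamePerm σ y) := by
  obtain ⟨t, h | h⟩ := h <;> exact ⟨σ t, by simp [renamePerm, h]⟩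

/-- Renaming of the letters, as a homomorphism to the automorphisms of the tree. -/
def rename : Equiv.Perm S →* (tree S ≃g tree S) where
  toFun σ :=
    { toEquiv := renamePerm σ
      map_rel_iff' {x y} := by
        refine ⟨fun h ↦ ?_, adj_renamePerm σ⟩
        rw [← (renamePerm σ).left_inv x, ← (renamePerm σ).left_inv y]
        exact adj_renamePerm σ.symm h }
  map_one' := RelIso.ext fun x ↦ Subtype.ext (List.map_id _)
  map_mul' σ τ := RelIso.ext fun x ↦ Subtype.ext (List.map_map (f := τ) (g := σ)).symm

@[simp]
theorem coe_rename (σ : Equiv.Perm S) (x : ReducedWord S) : (rename σ x).1 = x.1.map σ :=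
  rfl

theorem rename_nil (σ : Equiv.Perm S) : rename σ nil = nil :=
  rfl

theorem rename_single (σ : Equiv.Perm S) (s : S) : rename σ (single s) = single (σ s) :=
  rfl

theorem rename_mul_flipIso (σ : Equiv.Perm S) (s : S) :
    rename σ * flipIso s = flipIso (σ s) * rename σ :=
  RelIso.ext fun x ↦ Subtype.ext (map_flipList σ.injective s x.1)

end ReducedWord

end ReducedWords

section InvolutionAmalgam

universe u

/-- `G` is the amalgamated product `A *_C (C × ⟨v⟩)` with respect to `ψ : A →* G`, where `v` is an
involution, expressed through its universal property. The test groups live in the universe of `A`,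
which contains both `A` itself and the automorphism group of the tree on which `G` acts. -/
structure IsInvolutionAmalgam {A : Type u} {G : Type*} [Group A] [Group G] (ψ : A →* G)
    (C : Subgroup A) (v : G) : Prop where
  mul_self : v * v = 1
  commute : ∀ c ∈ C, Commute (ψ c) v
  closure_eq_top : Subgroup.closure (Set.range ψ ∪ {v}) = ⊤
  exists_lift : ∀ (P : Type u) [Group P] (α : A →* P) (p : P), p * p = 1 →
    (∀ c ∈ C, Commute (α c) p) → ∃ β : G →* P, β.comp ψ = α ∧ β v = p

namespace IsInvolutionAmalgam

open MulAction ReducedWord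

variable {A : Type u} {G : Type*} [Group A] [Group G] {ψ : A →* G} {C : Subgroup A} {v : G}

theorem injective (h : IsInvolutionAmalgam ψ C v) : Function.Injective ψ := by
  obtain ⟨β, hβ, -⟩ := h.exists_lift A (.id A) 1 (mul_one 1) fun c _ ↦ Commute.one_right c
  exact .of_comp (f := β) (by
    rw [← MonoidHom.coe_comp, hβ]
    exact Function.injective_id)

theorem exists_treeAction (h : IsInvolutionAmalgam ψ C v) :
    ∃ β : G →* (tree (A ⧸ C) ≃g tree (A ⧸ C)),
      β.comp ψ = rename.comp (toPermHom A (A ⧸ C)) ∧ β v = flipIso ((1 : A) : A ⧸ C) := by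
  refine h.exists_lift _ _ _ (flipIso_mul_self _) fun c hc ↦ (rename_mul_flipIso _ _).trans ?_
  have hc : c • ((1 : A) : A ⧸ C) = ((1 : A) : A ⧸ C) := QuotientGroup.eq.2 (by simpa using hc)
  exact congrArg (flipIso · * _) hc

/-- The action on the Bass–Serre tree of the amalgam: `A` permutes the letters `A ⧸ C` and `v`
multiplies by the letter `C`. -/
noncomputable def treeAction (h : IsInvolutionAmalgam ψ C v) :
    G →* (tree (A ⧸ C) ≃g tree (A ⧸ C)) :=
  h.exists_treeAction.choose

theorem treeAction_apply (h : IsInvolutionAmalgam ψ C v) (a : A) :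
    h.treeAction (ψ a) = rename (toPerm a) :=
  DFunLike.congr_fun h.exists_treeAction.choose_spec.1 a

theorem treeAction_involution (h : IsInvolutionAmalgam ψ C v) :
    h.treeAction v = flipIso ((1 : A) : A ⧸ C) :=
  h.exists_treeAction.choose_spec.2

/-- The conjugate of `v` that acts on the Bass–Serre tree as multiplication by a given letter. -/
noncomputable def letter (_ : IsInvolutionAmalgam ψ C v) (s : A ⧸ C) : G :=
  ψ s.out * v * (ψ s.out)⁻¹

theorem letter_mk (h : IsInvolutionAmalgam ψ C v) (a : A) :
    h.letter (a : A ⧸ C) = ψ a * v * (ψ a)⁻¹ := by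
  obtain ⟨c, hc⟩ := QuotientGroup.mk_out_eq_mul C a
  rw [letter, hc, map_mul, mul_assoc (ψ a), (h.commute c c.2).eq]
  group

theorem treeAction_letter (h : IsInvolutionAmalgam ψ C v) (s : A ⧸ C) :
    h.treeAction (h.letter s) = flipIso s := by
  obtain ⟨a, rfl⟩ := QuotientGroup.mk_surjective s
  rw [letter_mk, map_mul, map_mul, map_inv, treeAction_apply, treeAction_involution,
    rename_mul_flipIso, mul_inv_cancel_right, toPerm_apply, Quotient.smul_coe, smul_eq_mul, mul_one]

theorem apply_mul_letter (h : IsInvolutionAmalgam ψ C v) (a : A) (s : A ⧸ C) :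
    ψ a * h.letter s = h.letter (a • s) * ψ a := by
  obtain ⟨b, rfl⟩ := QuotientGroup.mk_surjective s
  rw [Quotient.smul_coe, letter_mk, letter_mk, smul_eq_mul, map_mul]
  group

/-- The value in `G` of a word in the letters `A ⧸ C`. -/
noncomputable def eval (h : IsInvolutionAmalgam ψ C v) (x : ReducedWord (A ⧸ C)) : G :=
  (x.1.map h.letter).prod

theorem treeAction_eval_nil (h : IsInvolutionAmalgam ψ C v) (x : ReducedWord (A ⧸ C)) :
    h.treeAction (h.eval x) nil = x := by
  obtain ⟨l, hl⟩ := x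
  induction l with
  | nil => simp [eval, nil]
  | cons s l ih =>
    have hs : l.head? ≠ some s := fun h ↦ (List.isChain_cons.1 hl).1 s h rfl
    have hcons : h.eval ⟨s :: l, hl⟩ = h.letter s * h.eval ⟨l, hl.tail⟩ := List.prod_cons
    rw [hcons, map_mul, RelIso.mul_apply, ih hl.tail, treeAction_letter]
    exact Subtype.ext (flipList_of_head?_ne hs)

theorem involution_mul_eval (h : IsInvolutionAmalgam ψ C v) (x : ReducedWord (A ⧸ C)) :
    v * h.eval x = h.eval (flipIso ((1 : A) : A ⧸ C) x) := by
  have hv : h.letter ((1 : A) : A ⧸ C) = v := by simp [letter_mk]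
  simp only [eval, coe_flipIso]
  by_cases hx : x.1.head? = some ((1 : A) : A ⧸ C)
  · obtain ⟨l, hl⟩ := List.head?_eq_some_iff.1 hx
    rw [hl, flipList_self, List.map_cons, List.prod_cons, hv, ← mul_assoc, h.mul_self, one_mul]
  · rw [flipList_of_head?_ne hx, List.map_cons, List.prod_cons, hv]

theorem apply_mul_eval (h : IsInvolutionAmalgam ψ C v) (a : A) (x : ReducedWord (A ⧸ C)) :
    ψ a * h.eval x = h.eval (rename (toPerm a) x) * ψ a := by
  simp only [eval, coe_rename]
  induction x.1 with
  | nil => simp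
  | cons s l ih =>
    simp only [List.map_cons, List.prod_cons, toPerm_apply]
    rw [← mul_assoc, apply_mul_letter, mul_assoc, ih, mul_assoc]

theorem exists_eq_eval_mul (h : IsInvolutionAmalgam ψ C v) (g : G) :
    ∃ x a, g = h.eval x * ψ a := by
  have hg : g ∈ Subgroup.closure (Set.range ψ ∪ {v}) := h.closure_eq_top ▸ trivial
  have hA (a : A) (g : G) : (∃ x b, g = h.eval x * ψ b) → ∃ x b, ψ a * g = h.eval x * ψ b := by
    rintro ⟨x, b, rfl⟩
    exact ⟨_, a * b, by rw [← mul_assoc, apply_mul_eval, mul_assoc, map_mul]⟩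
  have hv (g : G) : (∃ x b, g = h.eval x * ψ b) → ∃ x b, v * g = h.eval x * ψ b := by
    rintro ⟨x, b, rfl⟩
    exact ⟨_, b, by rw [← mul_assoc, involution_mul_eval]⟩
  induction hg using Subgroup.closure_induction_left with
  | one => exact ⟨nil, 1, by simp [eval, nil]⟩
  | mul_left s hs g _ ih =>
    rcases hs with ⟨a, rfl⟩ | rfl
    exacts [hA a g ih, hv g ih]
  | inv_mul_cancel s hs g _ ih =>
    rcases hs with ⟨a, rfl⟩ | rfl
    · exact map_inv ψ a ▸ hA a⁻¹ g ih
    · exact (inv_eq_of_mul_eq_one_left h.mul_self).symm ▸ hv g ih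

theorem treeAction_nil_eq_nil_iff (h : IsInvolutionAmalgam ψ C v) {g : G} :
    h.treeAction g nil = nil ↔ g ∈ ψ.range := by
  constructor
  · obtain ⟨x, a, rfl⟩ := h.exists_eq_eval_mul g
    rw [map_mul, RelIso.mul_apply, treeAction_apply, rename_nil, treeAction_eval_nil]
    rintro rfl
    exact ⟨a, by simp [eval, nil]⟩
  · rintro ⟨a, rfl⟩
    rw [treeAction_apply, rename_nil]

theorem treeAction_fixes_edge_iff (h : IsInvolutionAmalgam ψ C v) {g : G} :
    h.treeAction g nil = nil ∧
      h.treeAction g (single ((1 : A) : A ⧸ C)) = single ((1 : A) : A ⧸ C) ↔ g ∈ C.map ψ := by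
  have hC (a : A) : h.treeAction (ψ a) (single ((1 : A) : A ⧸ C)) = single ((1 : A) : A ⧸ C) ↔
      a ∈ C := by
    rw [treeAction_apply, rename_single, toPerm_apply, Quotient.smul_coe]
    simp [single, QuotientGroup.eq]
  rw [treeAction_nil_eq_nil_iff]
  constructor
  · rintro ⟨⟨a, rfl⟩, ha⟩
    exact ⟨a, (hC a).1 ha, rfl⟩
  · rintro ⟨a, ha, rfl⟩
    exact ⟨⟨a, rfl⟩, (hC a).2 ha⟩

theorem exists_treeAction_eq_of_adj (h : IsInvolutionAmalgam ψ C v) {x y : ReducedWord (A ⧸ C)}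
    (hxy : (tree (A ⧸ C)).Adj x y) :
    ∃ g, h.treeAction g nil = x ∧ h.treeAction g (single ((1 : A) : A ⧸ C)) = y := by
  set g := h.eval x
  have hgx : h.treeAction g nil = x := h.treeAction_eval_nil x
  obtain ⟨z, rfl⟩ := (h.treeAction g).surjective y
  rw [← hgx, (h.treeAction g).map_adj_iff] at hxy
  obtain ⟨s, hs | hs⟩ := hxy
  · obtain ⟨a, rfl⟩ := QuotientGroup.mk_surjective s
    refine ⟨g * ψ a, ?_, ?_⟩
    · rw [map_mul, RelIso.mul_apply, treeAction_apply, rename_nil, hgx]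
    · rw [map_mul, RelIso.mul_apply, treeAction_apply, rename_single, toPerm_apply,
        Quotient.smul_coe, smul_eq_mul, mul_one]
      exact congrArg _ (Subtype.ext hs.symm)
  · simp [nil] at hs

theorem coherent (h : IsInvolutionAmalgam ψ C v) (hA : Group.Coherent A)
    (hC : Group.Slender C) : Group.Coherent G := by
  let _ : MulAction G (ReducedWord (A ⧸ C)) := MulAction.compHom _ h.treeAction
  refine coherent_of_action_on_tree tree_isTree (fun g _ _ ↦ (h.treeAction g).map_adj_iff.2)
    (fun x ↦ ?_) fun x y hxy ↦ ?_
  · obtain ⟨g, hg⟩ : ∃ g : G, x = g • nil := ⟨_, (h.treeAction_eval_nil x).symm⟩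
    have hstab : stabilizer G (nil : ReducedWord (A ⧸ C)) = ψ.range :=
      Subgroup.ext fun _ ↦ h.treeAction_nil_eq_nil_iff
    refine coherent_congr (stabilizerEquivStabilizer hg) ?_
    rw [hstab]
    exact coherent_congr (ψ.ofInjective h.injective) hA
  · obtain ⟨g, hgx, hgy⟩ := h.exists_treeAction_eq_of_adj hxy
    have hg : (x, y) = g • (nil, single ((1 : A) : A ⧸ C)) := Prod.ext hgx.symm hgy.symm
    have hstab : stabilizer G ((nil : ReducedWord (A ⧸ C)), single ((1 : A) : A ⧸ C)) =
        C.map ψ := Subgroup.ext fun _ ↦ Prod.ext_iff.trans h.treeAction_fixes_edge_iff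
    refine slender_congr (stabilizerEquivStabilizer hg) ?_
    rw [hstab]
    exact slender_congr (C.equivMapOfInjective ψ h.injective) hC

end IsInvolutionAmalgam

end InvolutionAmalgam

section Slender

variable {G H : Type*} [Group G] [Group H]

theorem slender_of_ker {f : G →* H} (hker : Group.Slender f.ker) (hH : Group.Slender H) :
    Group.Slender G := fun K ↦ by
  obtain ⟨T, hT, hTfin⟩ := (Subgroup.fg_iff _).1 (hH (K.map f))
  obtain ⟨S, hSK, hSfin, hS⟩ := Set.exists_subset_image_finite_and
    (p := fun T ↦ Subgroup.closure T = K.map f).1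
    ⟨T, (hT ▸ Subgroup.subset_closure : T ⊆ K.map f), hTfin, hT⟩
  have hinf : (K ⊓ f.ker).FG := fg_of_le_of_slender hker inf_le_right
  have hK : K = Subgroup.closure S ⊔ K ⊓ f.ker := by
    refine le_antisymm (fun k hk ↦ ?_) (sup_le ((Subgroup.closure_le K).2 hSK) inf_le_left)
    have hfk : f k ∈ (Subgroup.closure S).map f := by
      rw [MonoidHom.map_closure, hS]
      exact Subgroup.mem_map_of_mem f hk
    obtain ⟨x, hx, hxk⟩ := hfk
    have hxK : x ∈ K := (Subgroup.closure_le K).2 hSK hx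
    have hker : x⁻¹ * k ∈ f.ker := by simp [hxk]
    rw [← mul_inv_cancel_left x k]
    exact Subgroup.mul_mem_sup hx (Subgroup.mem_inf.2 ⟨mul_mem (inv_mem hxK) hk, hker⟩)
  rw [hK]
  exact ((Subgroup.fg_iff _).2 ⟨S, rfl, hSfin⟩).sup hinf

theorem slender_sup {M N : Subgroup G} (hM : Group.Slender M) (hN : Group.Slender N)
    (hMN : M ≤ Subgroup.normalizer (N : Set G)) : Group.Slender (M ⊔ N : Subgroup G) := by
  have := Subgroup.normal_subgroupOf_sup_of_le_normalizer hMN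
  refine slender_of_ker (f := QuotientGroup.mk' (N.subgroupOf (M ⊔ N))) ?_ ?_
  · rw [QuotientGroup.ker_mk']
    exact slender_congr (Subgroup.subgroupOfEquivOfLe le_sup_right).symm hN
  · have := Subgroup.normal_subgroupOf_of_le_normalizer hMN
    exact slender_congr (QuotientGroup.quotientInfEquivProdNormalizerQuotient M N hMN)
      (slender_of_surjective (QuotientGroup.mk'_surjective _) hM)

theorem slender_of_isCyclic [IsCyclic G] : Group.Slender G := fun K ↦ by
  obtain ⟨g, hg⟩ := (Subgroup.isCyclic_iff_exists_zpowers_eq_top K).1 inferInstance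
  exact ⟨{g}, by rw [Finset.coe_singleton, ← Subgroup.zpowers_eq_closure, hg]⟩

theorem slender_closure_union {S T : Set G} (hS : Group.Slender (Subgroup.closure S))
    (hT : Group.Slender (Subgroup.closure T)) (hST : ∀ s ∈ S, ∀ t ∈ T, Commute s t) :
    Group.Slender (Subgroup.closure (S ∪ T)) := by
  rw [Subgroup.closure_union]
  refine slender_sup hS hT (le_trans ?_ (Subgroup.centralizer_le_normalizer _))
  rw [Subgroup.centralizer_closure, Subgroup.closure_le]
  exact fun s hs ↦ Subgroup.mem_centralizer_iff.2 fun t ht ↦ (hST s hs t ht).symm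

theorem slender_closure_pair {s t : G} (hs : s * s = 1) (ht : t * t = 1) :
    Group.Slender (Subgroup.closure {s, t}) := by
  have hsup : Subgroup.closure {s, t} = Subgroup.zpowers s ⊔ Subgroup.zpowers (s * t) := by
    refine le_antisymm ((Subgroup.closure_le _).2 ?_) ?_
    · have hmem := Subgroup.mem_sup_left (T := Subgroup.zpowers (s * t)) (Subgroup.mem_zpowers s)
      rintro x (rfl | hx)
      · exact hmem
      · have ht := mul_mem hmem (Subgroup.mem_sup_right (Subgroup.mem_zpowers (s * t)))
        rw [← mul_assoc, hs, one_mul] at ht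
        exact Set.mem_singleton_iff.1 hx ▸ ht
    · have hmem {x : G} (hx : x ∈ ({s, t} : Set G)) := Subgroup.subset_closure hx
      exact sup_le (Subgroup.zpowers_le.2 (hmem (.inl rfl)))
        (Subgroup.zpowers_le.2 (mul_mem (hmem (.inl rfl)) (hmem (.inr rfl))))
  have hinv : s * (s * t) * s⁻¹ = (s * t)⁻¹ := by
    rw [inv_eq_of_mul_eq_one_left hs, mul_inv_rev, inv_eq_of_mul_eq_one_left hs,
      inv_eq_of_mul_eq_one_left ht, ← mul_assoc, hs, one_mul]
  rw [hsup]
  refine slender_sup slender_of_isCyclic slender_of_isCyclic (Subgroup.zpowers_le.2 ?_)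
  rw [Subgroup.mem_normalizer_iff_map_conj_eq, MonoidHom.map_zpowers]
  exact (congrArg Subgroup.zpowers hinv).trans Subgroup.zpowers_inv

theorem slender_closure_of_involutions (U : Finset G) (hinv : ∀ u ∈ U, u * u = 1)
    (hcomm : ∀ a ∈ U, ∀ b ∈ U, ∀ c ∈ U, ¬ Commute a b → ¬ Commute a c → b = c) :
    Group.Slender (Subgroup.closure (U : Set G)) := by
  classical
  induction U using Finset.strongInduction with
  | H U ih =>
  rcases U.eq_empty_or_nonempty with rfl | ⟨s, hs⟩
  · rw [Finset.coe_empty, Subgroup.closure_empty]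
    exact slender_of_isCyclic
  obtain ⟨t, ht, hst, hts⟩ : ∃ t ∈ U, (∀ b ∈ U, ¬ Commute s b → b = t) ∧
      ∀ b ∈ U, ¬ Commute t b → b = s := by
    by_cases h : ∃ t ∈ U, ¬ Commute s t
    · obtain ⟨t, ht, hst⟩ := h
      exact ⟨t, ht, fun b hb hsb ↦ hcomm s hs b hb t ht hsb hst,
        fun b hb htb ↦ hcomm t ht b hb s hs htb fun hts ↦ hst hts.symm⟩
    · push Not at h
      exact ⟨s, hs, fun b hb hsb ↦ (hsb (h b hb)).elim, fun b hb hsb ↦ (hsb (h b hb)).elim⟩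
  have hrest : U \ {s, t} ⊂ U :=
    Finset.sdiff_ssubset (Finset.insert_subset hs (Finset.singleton_subset_iff.2 ht)) ⟨s, by simp⟩
  have hmem : ∀ u ∈ U \ {s, t}, u ∈ U := hrest.subset
  have hU : (U : Set G) = {s, t} ∪ ((U \ {s, t} : Finset G) : Set G) := by
    rw [Finset.coe_sdiff, Finset.coe_pair, Set.union_sdiff_cancel]
    exact Set.pair_subset hs ht
  rw [hU]
  refine slender_closure_union (slender_closure_pair (hinv s hs) (hinv t ht))
    (ih _ hrest (fun u hu ↦ hinv u (hmem u hu)) fun a ha b hb c hc ↦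
      hcomm a (hmem a ha) b (hmem b hb) c (hmem c hc)) fun a ha b hb ↦ ?_
  by_contra hab
  obtain ⟨hbU, hbst⟩ := Finset.mem_sdiff.1 hb
  rcases ha with rfl | rfl
  · exact hbst (by simp [hst b hbU hab])
  · exact hbst (by simp [hts b hbU hab])

end Slender

section RightAngledCoxeter

variable {V : Type*} [DecidableEq V] (Γ : SimpleGraph V) [DecidableRel Γ.Adj]

/-- The standard generator of the right-angled Coxeter group at the vertex `v`. -/
def racgGen (v : V) : Γ.racg :=
  Γ.coxeterMatrix.simple v

theorem racgGen_mul_self (v : V) : racgGen Γ v * racgGen Γ v = 1 :=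
  Γ.coxeterMatrix.toCoxeterSystem.simple_mul_simple_self v

variable {Γ} in
theorem commute_racgGen {v w : V} (h : Γ.Adj v w) : Commute (racgGen Γ v) (racgGen Γ w) := by
  have hM : Γ.coxeterMatrix v w = 2 := by
    change (if v = w then 1 else if Γ.Adj v w then 2 else 0) = 2
    rw [if_neg h.ne, if_pos h]
  have hpow : (racgGen Γ v * racgGen Γ w) ^ 2 = 1 :=
    hM ▸ Γ.coxeterMatrix.toCoxeterSystem.simple_mul_simple_pow v w
  have hinv (u : V) : (racgGen Γ u)⁻¹ = racgGen Γ u :=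
    inv_eq_of_mul_eq_one_left (racgGen_mul_self Γ u)
  calc racgGen Γ v * racgGen Γ w = (racgGen Γ v * racgGen Γ w)⁻¹ :=
        (inv_eq_of_mul_eq_one_left (by rwa [← pow_two])).symm
    _ = racgGen Γ w * racgGen Γ v := by rw [mul_inv_rev, hinv, hinv]

theorem closure_range_racgGen : Subgroup.closure (Set.range (racgGen Γ)) = ⊤ :=
  Γ.coxeterMatrix.toCoxeterSystem.subgroup_closure_range_simple

variable {Γ} in
theorem exists_racg_lift {P : Type*} [Group P] {f : V → P} (hf : ∀ v, f v * f v = 1)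
    (hcomm : ∀ v w, Γ.Adj v w → Commute (f v) (f w)) :
    ∃ β : Γ.racg →* P, ∀ v, β (racgGen Γ v) = f v := by
  have hlift : Γ.coxeterMatrix.IsLiftable f := by
    intro v w
    change (f v * f w) ^ (if v = w then 1 else if Γ.Adj v w then 2 else 0) = 1
    split_ifs with h h'
    · rw [← h, pow_one, hf]
    · rw [(hcomm v w h').mul_pow, pow_two, pow_two, hf, hf, mul_one]
    · rw [pow_zero]
  exact ⟨Γ.coxeterMatrix.toCoxeterSystem.lift ⟨f, hlift⟩,
    Γ.coxeterMatrix.toCoxeterSystem.lift_apply_simple hlift⟩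

/-- The subgroup of the right-angled Coxeter group generated by the vertices in `s`. -/
def specialSubgroup (s : Set V) : Subgroup Γ.racg :=
  Subgroup.closure (racgGen Γ '' s)

variable {Γ} in
theorem racgGen_mem_specialSubgroup {s : Set V} {v : V} (hv : v ∈ s) :
    racgGen Γ v ∈ specialSubgroup Γ s :=
  Subgroup.subset_closure ⟨v, hv, rfl⟩

theorem specialSubgroup_mono : Monotone (specialSubgroup Γ) :=
  fun _ _ h ↦ Subgroup.closure_mono (Set.image_mono h)

theorem exists_le_specialSubgroup_of_fg {K : Subgroup Γ.racg} (hK : K.FG) :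
    ∃ s : Finset V, K ≤ specialSubgroup Γ s := by
  have hmem (g : Γ.racg) : ∃ s : Finset V, g ∈ specialSubgroup Γ s := by
    have hg : g ∈ Subgroup.closure (Set.range (racgGen Γ)) := by
      rw [closure_range_racgGen]
      trivial
    induction hg using Subgroup.closure_induction with
    | mem g hg =>
      obtain ⟨v, rfl⟩ := hg
      exact ⟨{v}, racgGen_mem_specialSubgroup (Finset.mem_coe.2 (Finset.mem_singleton_self v))⟩
    | one => exact ⟨∅, one_mem _⟩
    | mul g h _ _ hg hh =>
      obtain ⟨s, hs⟩ := hg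
      obtain ⟨t, ht⟩ := hh
      refine ⟨s ∪ t, mul_mem (specialSubgroup_mono Γ ?_ hs) (specialSubgroup_mono Γ ?_ ht)⟩ <;>
        simp
    | inv g _ hg => exact hg.imp fun s hs ↦ inv_mem hs
  choose s hs using hmem
  obtain ⟨T, rfl⟩ := hK
  refine ⟨T.biUnion s, (Subgroup.closure_le _).2 fun g hg ↦ specialSubgroup_mono Γ ?_ (hs g)⟩
  exact Finset.coe_subset.2 (Finset.subset_biUnion_of_mem s hg)

theorem coherent_of_coherent_specialSubgroup
    (h : ∀ s : Finset V, Group.Coherent (specialSubgroup Γ s)) : Group.Coherent Γ.racg :=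
  fun K hK ↦ by
    obtain ⟨s, hs⟩ := exists_le_specialSubgroup_of_fg Γ hK
    exact finitelyPresented_of_le_of_coherent (h s) hs hK

theorem slender_specialSubgroup {s : Finset V}
    (hs : ∀ a ∈ s, ∀ b ∈ s, ∀ c ∈ s, Γᶜ.Adj a b → Γᶜ.Adj a c → b = c) :
    Group.Slender (specialSubgroup Γ s) := by
  classical
  have hcompl {a b : V} (hab : ¬ Commute (racgGen Γ a) (racgGen Γ b)) : Γᶜ.Adj a b :=
    ⟨fun h ↦ hab (h ▸ Commute.refl _), fun h ↦ hab (commute_racgGen h)⟩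
  rw [specialSubgroup, ← Finset.coe_image]
  refine slender_closure_of_involutions _ ?_ ?_ <;> simp only [Finset.forall_mem_image]
  · exact fun v _ ↦ racgGen_mul_self Γ v
  · exact fun a ha b hb c hc hab hac ↦
      congrArg _ (hs a ha b hb c hc (hcompl hab) (hcompl hac))

theorem exists_racg_lift_of_specialSubgroup {s : Set V} {v : V} (hv : v ∉ s) {P : Type*} [Group P]
    (α : specialSubgroup Γ s →* P) {p : P} (hp : p * p = 1)
    (hα : ∀ w (hw : w ∈ s), Γ.Adj v w →
      Commute (α ⟨racgGen Γ w, racgGen_mem_specialSubgroup hw⟩) p) :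
    ∃ β : Γ.racg →* P,
      (∀ w (hw : w ∈ s), β (racgGen Γ w) = α ⟨racgGen Γ w, racgGen_mem_specialSubgroup hw⟩) ∧
        β (racgGen Γ v) = p := by
  classical
  let f (w : V) : P :=
    if hw : w ∈ s then α ⟨racgGen Γ w, racgGen_mem_specialSubgroup hw⟩ else if w = v then p else 1
  have hfs {w : V} (hw : w ∈ s) : f w = α ⟨racgGen Γ w, racgGen_mem_specialSubgroup hw⟩ :=
    dif_pos hw
  have hfv : f v = p := by simp [f, hv]
  have hf1 {w : V} (hw : w ∉ s) (hwv : w ≠ v) : f w = 1 := by simp [f, hw, hwv]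
  have hsv {w : V} (hw : w ∈ s) (h : Γ.Adj v w) : Commute (f w) (f v) := by
    rw [hfs hw, hfv]
    exact hα w hw h
  have hinv (w : V) : f w * f w = 1 := by
    by_cases hw : w ∈ s
    · rw [hfs hw, ← map_mul]
      exact (congrArg α (Subtype.ext (racgGen_mul_self Γ w))).trans (map_one α)
    · rcases eq_or_ne w v with rfl | hwv
      · rw [hfv, hp]
      · rw [hf1 hw hwv, mul_one]
  have hcomm (a b : V) (h : Γ.Adj a b) : Commute (f a) (f b) := by
    by_cases ha : a ∈ s
    · by_cases hb : b ∈ s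
      · rw [hfs ha, hfs hb, commute_iff_eq, ← map_mul, ← map_mul]
        exact congrArg α (Subtype.ext (commute_racgGen h))
      · rcases eq_or_ne b v with rfl | hbv
        · exact hsv ha h.symm
        · exact hf1 hb hbv ▸ Commute.one_right _
    · rcases eq_or_ne a v with rfl | hav
      · by_cases hb : b ∈ s
        · exact (hsv hb h).symm
        · exact hf1 hb h.ne' ▸ Commute.one_right _
      · exact hf1 ha hav ▸ Commute.one_left _
  obtain ⟨β, hβ⟩ := exists_racg_lift hinv hcomm
  exact ⟨β, fun w hw ↦ (hβ w).trans (hfs hw), (hβ v).trans hfv⟩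

theorem isInvolutionAmalgam_specialSubgroup {s : Set V} {v : V} (hv : v ∉ s) :
    IsInvolutionAmalgam
      (Subgroup.inclusion (specialSubgroup_mono Γ (Set.subset_insert v s)))
      ((specialSubgroup Γ (s ∩ Γ.neighborSet v)).subgroupOf (specialSubgroup Γ s))
      ⟨racgGen Γ v, racgGen_mem_specialSubgroup (Set.mem_insert v s)⟩ where
  mul_self := Subtype.ext (racgGen_mul_self Γ v)
  commute c hc := by
    have hle : specialSubgroup Γ (s ∩ Γ.neighborSet v) ≤ Subgroup.centralizer {racgGen Γ v} := by
      refine (Subgroup.closure_le _).2 ?_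
      rintro _ ⟨w, ⟨-, hw⟩, rfl⟩
      exact Subgroup.mem_centralizer_singleton_iff.2 (commute_racgGen hw).symm.eq
    exact Subtype.ext (Subgroup.mem_centralizer_singleton_iff.1 (hle hc))
  closure_eq_top := by
    refine top_le_iff.1 (Subgroup.closure_closure_coe_preimage.ge.trans (Subgroup.closure_mono ?_))
    rintro ⟨_, _⟩ ⟨w, rfl | hw, rfl⟩
    · exact .inr rfl
    · exact .inl ⟨⟨_, racgGen_mem_specialSubgroup hw⟩, rfl⟩
  exists_lift P _ α p hp hα := by
    obtain ⟨β, hβ, hβv⟩ := exists_racg_lift_of_specialSubgroup Γ hv α hp fun w hw h ↦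
      hα _ (Subgroup.mem_subgroupOf.2 (racgGen_mem_specialSubgroup ⟨hw, h⟩))
    refine ⟨β.comp (Subgroup.subtype _),
      MonoidHom.eq_of_eqOn_dense Subgroup.closure_closure_coe_preimage ?_, hβv⟩
    rintro ⟨_, _⟩ ⟨w, hw, rfl⟩
    exact hβ w hw

/-- The complement of the link of `v` is a matching. The right-angled Coxeter group of a finite
such link is a product of copies of `ℤ/2` and of the infinite dihedral group, hence slender. -/
def HasSlenderLink {W : Type*} (Δ : SimpleGraph W) (v : W) : Prop :=
  ∀ a b c, Δ.Adj v a → Δ.Adj v b → Δ.Adj v c → Δᶜ.Adj a b → Δᶜ.Adj a c → b = c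

theorem coherent_specialSubgroup_insert {s : Set V} {v : V} (hv : v ∉ s)
    (hlink : Group.Slender (specialSubgroup Γ (s ∩ Γ.neighborSet v)))
    (hs : Group.Coherent (specialSubgroup Γ s)) :
    Group.Coherent (specialSubgroup Γ (insert v s)) :=
  (isInvolutionAmalgam_specialSubgroup Γ hv).coherent hs <| slender_congr
    (Subgroup.subgroupOfEquivOfLe (specialSubgroup_mono Γ Set.inter_subset_left)).symm hlink

theorem coherent_specialSubgroup_of_forall_exists_hasSlenderLink
    (h : ∀ s : Finset V, s.Nonempty → ∃ v, HasSlenderLink (Γ.induce (s : Set V)) v)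
    (s : Finset V) : Group.Coherent (specialSubgroup Γ s) := by
  induction s using Finset.strongInduction with
  | H s ih =>
  rcases s.eq_empty_or_nonempty with rfl | hs
  · intro K _
    have : Subsingleton (specialSubgroup Γ (∅ : Finset V)) := by
      rw [specialSubgroup, Finset.coe_empty, Set.image_empty, Subgroup.closure_empty]
      infer_instance
    exact finitelyPresented_iff_isFinitelyPresented.2 inferInstance
  obtain ⟨⟨v, hv⟩, hlink⟩ := h s hs
  rw [← Finset.insert_erase hv, Finset.coe_insert]
  refine coherent_specialSubgroup_insert Γ (by simp) ?_ (ih _ (Finset.erase_ssubset hv))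
  have hinter : ((s.erase v : Finset V) : Set V) ∩ Γ.neighborSet v =
      ((s.erase v).filter (Γ.Adj v) : Finset V) := by
    ext; simp [and_comm]
  rw [hinter]
  refine slender_specialSubgroup Γ fun a ha b hb c hc hab hac ↦ ?_
  simp only [Finset.mem_filter, Finset.mem_erase] at ha hb hc
  exact congrArg Subtype.val (hlink ⟨a, ha.1.2⟩ ⟨b, hb.1.2⟩ ⟨c, hc.1.2⟩ ha.2 hb.2 hc.2
    ⟨fun h ↦ hab.1 (congrArg Subtype.val h), hab.2⟩
    ⟨fun h ↦ hac.1 (congrArg Subtype.val h), hac.2⟩)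

theorem coherent_racg_of_forall_exists_hasSlenderLink
    (h : ∀ s : Finset V, s.Nonempty → ∃ v, HasSlenderLink (Γ.induce (s : Set V)) v) :
    Group.Coherent Γ.racg :=
  coherent_of_coherent_specialSubgroup Γ
    (coherent_specialSubgroup_of_forall_exists_hasSlenderLink Γ h)

end RightAngledCoxeter

section EdgeCount

variable {V : Type*} {Γ : SimpleGraph V}

theorem three_le_degree_of_not_hasSlenderLink {v : V} [Fintype (Γ.neighborSet v)]
    (hv : ¬ HasSlenderLink Γ v) : 3 ≤ Γ.degree v := by
  classical
  simp only [HasSlenderLink, not_forall] at hv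
  obtain ⟨a, b, c, ha, hb, hc, hab, hac, hbc⟩ := hv
  calc 3 = ({a, b, c} : Finset V).card := (Finset.card_eq_three.2
        ⟨a, b, c, hab.ne, hac.ne, hbc, rfl⟩).symm
    _ ≤ Γ.degree v := Finset.card_le_card <| by simp [Finset.insert_subset_iff, ha, hb, hc]

theorem exists_degree_add_three_le_card_of_not_hasSlenderLink [Fintype V] [DecidableRel Γ.Adj]
    {v : V} (hv : ¬ HasSlenderLink Γ v) : ∃ a, Γ.degree a + 3 ≤ Fintype.card V := by
  classical
  simp only [HasSlenderLink, not_forall] at hv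
  obtain ⟨a, b, c, -, -, -, hab, hac, hbc⟩ := hv
  have hdisj : Disjoint (Γ.neighborFinset a) {a, b, c} := by
    simp [hab.2, hac.2]
  refine ⟨a, ?_⟩
  calc Γ.degree a + 3 = (Γ.neighborFinset a).card + ({a, b, c} : Finset V).card := by
        rw [Finset.card_eq_three.2 ⟨a, b, c, hab.ne, hac.ne, hbc, rfl⟩,
          SimpleGraph.card_neighborFinset_eq_degree]
    _ = (Γ.neighborFinset a ∪ {a, b, c}).card := (Finset.card_union_of_disjoint hdisj).symm
    _ ≤ Fintype.card V := Finset.card_le_univ _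

theorem nine_le_card_edgeFinset_of_forall_not_hasSlenderLink [Fintype V] [DecidableRel Γ.Adj]
    [Nonempty V] (h : ∀ v, ¬ HasSlenderLink Γ v) :
    9 ≤ Γ.edgeFinset.card := by
  have hdeg (v : V) : 3 ≤ Γ.degree v := three_le_degree_of_not_hasSlenderLink (h v)
  obtain ⟨a, ha⟩ := exists_degree_add_three_le_card_of_not_hasSlenderLink
    (h (Classical.arbitrary V))
  have hcard : 6 ≤ Fintype.card V := (Nat.add_le_add_right (hdeg a) 3).trans ha
  have hsum : Fintype.card V * 3 ≤ 2 * Γ.edgeFinset.card := by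
    rw [← Γ.sum_degrees_eq_twice_card_edges]
    exact Finset.card_nsmul_le_sum _ _ _ fun v _ ↦ hdeg v
  lia

theorem exists_hasSlenderLink_of_encard_edgeSet_le_eight [Finite V] [Nonempty V]
    (h : Γ.edgeSet.encard ≤ 8) : ∃ v, HasSlenderLink Γ v := by
  classical
  have := Fintype.ofFinite V
  by_contra! hno
  have hnine := nine_le_card_edgeFinset_of_forall_not_hasSlenderLink hno
  rw [← SimpleGraph.coe_edgeFinset, Set.encard_coe_eq_coe_finsetCard] at h
  have : Γ.edgeFinset.card ≤ 8 := by exact_mod_cast h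
  lia

theorem encard_edgeSet_induce_le (s : Set V) :
    (Γ.induce s).edgeSet.encard ≤ Γ.edgeSet.encard :=
  (SimpleGraph.Embedding.induce s).mapEdgeSet.encard_le

end EdgeCount

theorem racg_coherent_of_card_eq_six_of_edges_le_eight_general {V : Type*} [DecidableEq V]
    (Γ : SimpleGraph V) [DecidableRel Γ.Adj] (hedges : Γ.edgeSet.encard ≤ 8) :
    Group.Coherent Γ.racg :=
  coherent_racg_of_forall_exists_hasSlenderLink Γ fun s hs ↦ by
    have : Nonempty (s : Set V) := hs.to_subtype
    exact exists_hasSlenderLink_of_encard_edgeSet_le_eight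
      ((encard_edgeSet_induce_le _).trans hedges)

/-- The right-angled Coxeter group of a finite simplicial graph with exactly
`6` vertices and at most `8` edges is coherent. -/
theorem racg_coherent_of_card_eq_six_of_edges_le_eight
    {V : Type} [Fintype V] [DecidableEq V] (Γ : SimpleGraph V) [DecidableRel Γ.Adj]
    (hcard : Fintype.card V = 6) (hedges : Γ.edgeSet.ncard ≤ 8) :
    Group.Coherent Γ.racg :=
  racg_coherent_of_card_eq_six_of_edges_le_eight_general Γ <| by
    rw [← Set.Finite.cast_ncard_eq (Set.toFinite _)]
    exact_mod_cast hedges
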